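/- For every n ≥ 1, the total number of partitions of n having a fixed point equals the number of partitions of n whose mex is even. -/

import Mathlib

/-- The `d`-th largest part of a partition (1-indexed); `0` if the index is out of range. -/
def nthPart {n : ℕ} (p : n.Partition) (d : ℕ) : ℕ :=
  (p.parts.sort (· ≥ ·)).getD (d - 1) 0

/-- `f n d` is the number of partitions of `n` with fixed point `d`,
i.e. whose `d`-th largest part equals `d`. -/
noncomputable def f (n d : ℕ) : ℕ :=
  Nat.card {p : n.Partition // nthPart p d = d}
/-- The mex (minimal excludant) of a partition: the smallest positive integer
that is not a part. -/
noncomputable def mex {n : ℕ} (p : n.Partition) : ℕ :=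
  sInf {k : ℕ | 0 < k ∧ k ∉ p.parts}

/-- The nonincreasing lists of positive integers with sum `n`. -/
def partitionLists (n : ℕ) : Set (List ℕ) :=
  {l | l.Pairwise (· ≥ ·) ∧ (∀ x ∈ l, 0 < x) ∧ l.sum = n}

/-- Some entry of the list exceeds its (1-indexed) position by exactly `j`. -/
def HasShiftedFixedPoint (j : ℕ) (l : List ℕ) : Prop :=
  ∃ i, l.getD i 0 = i + 1 + j

/-- Pairs of lists which, joined by the entry `|A| + 1 + j`, form a nonincreasing list of positive
integers with sum `n + j + 1`. -/
def splitLists (j n : ℕ) : Set (List ℕ × List ℕ) :=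
  {P | P.1.Pairwise (· ≥ ·) ∧ P.2.Pairwise (· ≥ ·) ∧ (∀ a ∈ P.1, P.1.length + 1 + j ≤ a) ∧
    (∀ b ∈ P.2, b ≤ P.1.length + 1 + j) ∧ (∀ b ∈ P.2, 0 < b) ∧
    P.1.sum + P.1.length + P.2.sum = n}

theorem card_partition_sort (n : ℕ) (Q : List ℕ → Prop) :
    Nat.card {p : n.Partition // Q (p.parts.sort (· ≥ ·))} =
      {l | l ∈ partitionLists n ∧ Q l}.ncard := by
  rw [← Nat.card_coe_set_eq]
  refine Nat.card_congr (Equiv.ofBijective (fun p => ⟨p.1.parts.sort (· ≥ ·),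
    ⟨Multiset.pairwise_sort _ _, fun x hx => p.1.parts_pos ((Multiset.mem_sort _).1 hx), ?_⟩,
    p.2⟩) ⟨?_, ?_⟩)
  · rw [← Multiset.sum_coe, Multiset.sort_eq, p.1.parts_sum]
  · rintro ⟨p, hp⟩ ⟨q, hq⟩ h
    have h' : p.parts.sort (· ≥ ·) = q.parts.sort (· ≥ ·) := congrArg Subtype.val h
    have := congrArg (fun l : List ℕ => (l : Multiset ℕ)) h'
    simp only [Multiset.sort_eq] at this
    exact Subtype.ext (Nat.Partition.ext this)
  · rintro ⟨l, ⟨hl, hpos, hsum⟩, hQ⟩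
    have hs : (l : Multiset ℕ).sort (· ≥ ·) = l :=
      List.Perm.eq_of_pairwise' (r := (· ≥ ·)) (Multiset.pairwise_sort _ _) hl
        (Multiset.coe_eq_coe.1 (Multiset.sort_eq _ _))
    exact ⟨⟨⟨l, fun hi => hpos _ hi, by simpa using hsum⟩, by simpa only [hs] using hQ⟩,
      Subtype.ext hs⟩

theorem List.Pairwise.getD_antitone {l : List ℕ} (hl : l.Pairwise (· ≥ ·)) {i k : ℕ}
    (hik : i ≤ k) : l.getD k 0 ≤ l.getD i 0 := by
  rcases lt_or_ge k l.length with hk | hk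
  · rw [List.getD_eq_getElem _ _ hk, List.getD_eq_getElem _ _ (hik.trans_lt hk)]
    rcases hik.eq_or_lt with rfl | h
    · exact le_rfl
    · exact List.pairwise_iff_getElem.1 hl i k _ hk h
  · rw [List.getD_eq_default _ _ hk]
    exact Nat.zero_le _

theorem List.le_getD_of_forall_mem {l : List ℕ} {c i : ℕ} (hl : ∀ x ∈ l, c ≤ x)
    (hi : i < l.length) : c ≤ l.getD i 0 := by
  rw [List.getD_eq_getElem _ _ hi]
  exact hl _ (List.getElem_mem hi)

theorem List.getD_le_of_forall_mem {l : List ℕ} {c : ℕ} (hl : ∀ x ∈ l, x ≤ c) (i : ℕ) :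
    l.getD i 0 ≤ c := by
  rcases lt_or_ge i l.length with hi | hi
  · rw [List.getD_eq_getElem _ _ hi]
    exact hl _ (List.getElem_mem hi)
  · rw [List.getD_eq_default _ _ hi]
    exact Nat.zero_le _

theorem List.Pairwise.getD_le_of_mem_take {l : List ℕ} (hl : l.Pairwise (· ≥ ·)) {m x : ℕ}
    (hx : x ∈ l.take m) : l.getD (m - 1) 0 ≤ x := by
  obtain ⟨k, hk, rfl⟩ := List.getElem_of_mem hx
  rw [List.length_take] at hk
  rw [List.getElem_take, ← List.getD_eq_getElem l 0]
  exact hl.getD_antitone (by omega)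

theorem List.Pairwise.le_getD_of_mem_drop {l : List ℕ} (hl : l.Pairwise (· ≥ ·)) {m x : ℕ}
    (hx : x ∈ l.drop m) : x ≤ l.getD m 0 := by
  obtain ⟨k, hk, rfl⟩ := List.getElem_of_mem hx
  rw [List.getElem_drop, ← List.getD_eq_getElem l 0]
  exact hl.getD_antitone (by omega)

theorem ncard_hasShiftedFixedPoint (j n : ℕ) :
    {l | l ∈ partitionLists (n + j + 1) ∧ HasShiftedFixedPoint j l}.ncard =
      (splitLists j n).ncard := by
  have hinj : Set.InjOn (fun P : List ℕ × List ℕ => P.1 ++ (P.1.length + 1 + j) :: P.2)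
      (splitLists j n) := by
    have key : ∀ P ∈ splitLists j n, ∀ Q ∈ splitLists j n,
        P.1 ++ (P.1.length + 1 + j) :: P.2 = Q.1 ++ (Q.1.length + 1 + j) :: Q.2 →
        Q.1.length ≤ P.1.length := by
      rintro ⟨A, B⟩ - ⟨A', B'⟩ ⟨-, -, h, -⟩ he
      by_contra! hlt
      have := congrArg (fun l : List ℕ => l.getD A.length 0) he
      simp only [List.getD_append_right A _ _ _ le_rfl, List.getD_append A' _ _ _ hlt] at this
      have h2 := List.le_getD_of_forall_mem h hlt
      simp at this h2 hlt
      omega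
    intro P hP Q hQ he
    have hlen := le_antisymm (key Q hQ P hP he.symm) (key P hP Q hQ he)
    obtain ⟨h1, h2⟩ := List.append_inj he hlen
    exact Prod.ext h1 (List.cons.inj h2).2
  rw [← hinj.ncard_image]
  congr 1
  ext l
  constructor
  · rintro ⟨⟨hl, hpos, hsum⟩, i, hi⟩
    have hil : i < l.length := by
      by_contra! h
      rw [List.getD_eq_default _ _ h] at hi
      omega
    have hlen : (l.take i).length = i := by simp; omega
    have hget : l[i] = i + 1 + j := by rw [← hi, List.getD_eq_getElem]
    have hsplit : l.take i ++ (i + 1 + j) :: l.drop (i + 1) = l := by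
      rw [← hget, ← List.drop_eq_getElem_cons hil, List.take_append_drop]
    refine ⟨(l.take i, l.drop (i + 1)), ⟨hl.sublist (List.take_sublist _ _),
      hl.sublist (List.drop_sublist _ _), ?_, ?_, fun b hb => hpos b (List.mem_of_mem_drop hb), ?_⟩,
      by simpa only [hlen] using hsplit⟩
    · intro a ha
      have h1 := hl.getD_le_of_mem_take ha
      have h2 := hl.getD_antitone (Nat.sub_le i 1)
      simp only [hlen]
      omega
    · intro b hb
      have h1 := hl.le_getD_of_mem_drop hb
      have h2 := hl.getD_antitone (Nat.le_add_right i 1)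
      simp only [hlen]
      omega
    · have := congrArg List.sum hsplit
      rw [hsum, List.sum_append, List.sum_cons] at this
      simp only [hlen]
      omega
  · rintro ⟨⟨A, B⟩, ⟨hA, hB, hA', hB', hpos, hsum⟩, rfl⟩
    dsimp only at *
    refine ⟨⟨?_, ?_, ?_⟩, A.length, ?_⟩
    · rw [List.pairwise_append, List.pairwise_cons]
      refine ⟨hA, ⟨hB', hB⟩, fun a ha b hb => ?_⟩
      have h1 := hA' a ha
      rcases List.mem_cons.1 hb with rfl | hb
      · exact h1
      · exact (hB' b hb).trans h1
    · intro x hx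
      rcases List.mem_append.1 hx with hx | hx
      · have := hA' x hx
        omega
      · rcases List.mem_cons.1 hx with rfl | hx
        · omega
        · exact hpos x hx
    · rw [List.sum_append, List.sum_cons]
      omega
    · rw [List.getD_append_right _ _ _ _ le_rfl]
      simp

theorem ncard_not_hasShiftedFixedPoint (j n : ℕ) :
    {l | l ∈ partitionLists n ∧ ¬ HasShiftedFixedPoint (j + 1) l}.ncard =
      (splitLists j n).ncard := by
  have hinj : Set.InjOn (fun P : List ℕ × List ℕ => P.1.map (· + 1) ++ P.2)
      (splitLists j n) := by
    have key : ∀ P ∈ splitLists j n, ∀ Q ∈ splitLists j n,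
        P.1.map (· + 1) ++ P.2 = Q.1.map (· + 1) ++ Q.2 → Q.1.length ≤ P.1.length := by
      rintro ⟨A, B⟩ ⟨-, -, -, hB, -⟩ ⟨A', B'⟩ ⟨-, -, h, -⟩ he
      by_contra! hlt
      dsimp only at hB h hlt
      change A.map (· + 1) ++ B = A'.map (· + 1) ++ B' at he
      have := congrArg (fun l : List ℕ => l.getD A.length 0) he
      beta_reduce at this
      rw [List.getD_append_right _ _ _ _ (by simp), List.getD_append _ _ _ _ (by simpa)] at this
      have h2 := List.le_getD_of_forall_mem (l := A'.map (· + 1)) (c := A'.length + 2 + j)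
        (i := A.length) (by
          intro x hx
          obtain ⟨a, ha, rfl⟩ := List.mem_map.1 hx
          have := h a ha
          omega) (by simpa)
      have h3 := List.getD_le_of_forall_mem hB (A.length - (A.map (· + 1)).length)
      omega
    intro P hP Q hQ he
    have hlen := le_antisymm (key Q hQ P hP he.symm) (key P hP Q hQ he)
    obtain ⟨h1, h2⟩ := List.append_inj he (by simpa using hlen)
    exact Prod.ext (List.map_injective_iff.2 (add_left_injective 1) h1) h2
  rw [← hinj.ncard_image]
  congr 1
  ext l
  constructor
  · rintro ⟨⟨hl, hpos, hsum⟩, hnot⟩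
    have hex : ∃ i, l.getD i 0 < i + 1 + (j + 1) :=
      ⟨l.length, by rw [List.getD_eq_default _ _ le_rfl]; omega⟩
    obtain ⟨m, hm, hmin⟩ : ∃ m, l.getD m 0 < m + 1 + (j + 1) ∧
        ∀ k < m, k + 1 + (j + 1) ≤ l.getD k 0 :=
      ⟨Nat.find hex, Nat.find_spec hex, fun k hk => not_lt.1 (Nat.find_min hex hk)⟩
    have hml : m ≤ l.length := by
      by_contra! h
      have := hmin _ h
      rw [List.getD_eq_default _ _ le_rfl] at this
      omega
    have hlen : ((l.take m).map (· - 1)).length = m := by simpa using hml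
    have hbig : ∀ x ∈ l.take m, m + 2 + j ≤ x := by
      intro x hx
      have h0 : 0 < m := by
        rcases Nat.eq_zero_or_pos m with rfl | h
        · simp at hx
        · exact h
      have h1 := hl.getD_le_of_mem_take hx
      have h2 := hmin (m - 1) (by omega)
      have h3 : l.getD (m - 1) 0 ≠ m - 1 + 1 + (j + 1) := fun h => hnot ⟨_, h⟩
      omega
    have hmap : ((l.take m).map (· - 1)).map (· + 1) = l.take m := by
      rw [List.map_map]
      refine (List.map_congr_left fun x hx => ?_).trans (List.map_id _)
      have := hbig x hx
      simp only [Function.comp_apply, id]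
      omega
    have hsplit : ((l.take m).map (· - 1)).map (· + 1) ++ l.drop m = l := by
      rw [hmap, List.take_append_drop]
    refine ⟨((l.take m).map (· - 1), l.drop m), ⟨?_,
      hl.sublist (List.drop_sublist _ _), ?_, ?_, fun b hb => hpos b (List.mem_of_mem_drop hb), ?_⟩,
      hsplit⟩
    · exact (hl.sublist (List.take_sublist _ _)).map _ fun a b h => Nat.sub_le_sub_right h 1
    · intro a ha
      simp only [hlen] at ha ⊢
      obtain ⟨x, hx, rfl⟩ := List.mem_map.1 ha
      have := hbig x hx
      omega
    · intro b hb
      have h1 := hl.le_getD_of_mem_drop hb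
      simp only [hlen]
      omega
    · have := congrArg List.sum hsplit
      rw [hsum, List.sum_append, List.sum_map_add] at this
      simpa only [List.map_id', List.map_const', List.sum_replicate, smul_eq_mul, mul_one]
        using this
  · rintro ⟨⟨A, B⟩, ⟨hA, hB, hA', hB', hpos, hsum⟩, rfl⟩
    dsimp only at *
    have hbig : ∀ x ∈ A.map (· + 1), A.length + 2 + j ≤ x := by
      intro x hx
      obtain ⟨a, ha, rfl⟩ := List.mem_map.1 hx
      have := hA' a ha
      omega
    refine ⟨⟨?_, ?_, ?_⟩, ?_⟩
    · rw [List.pairwise_append]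
      refine ⟨hA.map _ fun a b h => Nat.add_le_add_right h 1, hB, fun a ha b hb => ?_⟩
      have h1 := hbig a ha
      have h2 := hB' b hb
      omega
    · intro x hx
      rcases List.mem_append.1 hx with hx | hx
      · have := hbig x hx
        omega
      · exact hpos x hx
    · rw [List.sum_append, List.sum_map_add]
      simpa using hsum
    · rintro ⟨i, hi⟩
      rcases lt_or_ge i A.length with h | h
      · rw [List.getD_append _ _ _ _ (by simpa)] at hi
        have := List.le_getD_of_forall_mem hbig (i := i) (by simpa)
        omega
      · rw [List.getD_append_right _ _ _ _ (by simpa)] at hi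
        have := List.getD_le_of_forall_mem hB' (i - (A.map (· + 1)).length)
        omega

theorem card_subtype_add_card_subtype_not {α : Type*} [Finite α] (Q : α → Prop) :
    Nat.card {a // Q a} + Nat.card {a // ¬ Q a} = Nat.card α := by
  classical
  rw [← Nat.card_sum]
  exact Nat.card_congr (Equiv.sumCompl Q)

theorem card_hasShiftedFixedPoint_add (j n : ℕ) :
    Nat.card {p : (n + j + 1).Partition // HasShiftedFixedPoint j (p.parts.sort (· ≥ ·))} +
      Nat.card {p : n.Partition // HasShiftedFixedPoint (j + 1) (p.parts.sort (· ≥ ·))} =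
    Nat.card n.Partition := by
  rw [card_partition_sort (n + j + 1), ncard_hasShiftedFixedPoint,
    ← ncard_not_hasShiftedFixedPoint, ← card_partition_sort n, add_comm]
  exact card_subtype_add_card_subtype_not
    fun p : n.Partition => HasShiftedFixedPoint (j + 1) (p.parts.sort (· ≥ ·))

theorem card_hasShiftedFixedPoint_eq_zero {j n : ℕ} (h : n ≤ j) :
    Nat.card {p : n.Partition // HasShiftedFixedPoint j (p.parts.sort (· ≥ ·))} = 0 := by
  have : IsEmpty {p : n.Partition // HasShiftedFixedPoint j (p.parts.sort (· ≥ ·))} := by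
    refine ⟨fun ⟨p, i, hi⟩ => ?_⟩
    have := List.getD_le_of_forall_mem (l := p.parts.sort (· ≥ ·)) (c := n)
      (fun x hx => Nat.Partition.le_of_mem_parts ((Multiset.mem_sort _).1 hx)) i
    omega
  exact Nat.card_of_isEmpty

theorem lt_mex_iff {n : ℕ} (p : n.Partition) (k : ℕ) :
    k < mex p ↔ ∀ i ∈ Finset.Icc 1 k, i ∈ p.parts := by
  have hne : {k : ℕ | 0 < k ∧ k ∉ p.parts}.Nonempty :=
    ⟨n + 1, by omega, fun h => absurd (Nat.Partition.le_of_mem_parts h) (by omega)⟩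
  constructor
  · intro h i hi
    rw [Finset.mem_Icc] at hi
    by_contra hni
    exact absurd (Nat.sInf_le (show i ∈ {k : ℕ | 0 < k ∧ k ∉ p.parts} from ⟨hi.1, hni⟩))
      (not_le.2 (lt_of_le_of_lt hi.2 h))
  · intro h
    by_contra! hle
    have := Nat.sInf_mem hne
    exact this.2 (h _ (Finset.mem_Icc.2 ⟨this.1, hle⟩))

theorem lt_mex_iff_le_parts {n : ℕ} (p : n.Partition) (k : ℕ) :
    k < mex p ↔ (Finset.Icc 1 k).val ≤ p.parts := by
  rw [lt_mex_iff, Multiset.le_iff_subset (Finset.nodup _)]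
  rfl

/-- Add one part of each size `1, …, k` to a partition. -/
def addStaircase (k : ℕ) {n : ℕ} (p : n.Partition) :
    (n + ∑ i ∈ Finset.Icc 1 k, i).Partition where
  parts := p.parts + (Finset.Icc 1 k).val
  parts_pos hi := (Multiset.mem_add.1 hi).elim p.parts_pos fun hi =>
    Nat.succ_le_iff.1 (Finset.mem_Icc.1 (Finset.mem_def.2 hi)).1
  parts_sum := by rw [Multiset.sum_add, p.parts_sum, Finset.sum_val]; rfl

theorem lt_mex_addStaircase (k : ℕ) {n : ℕ} (p : n.Partition) : k < mex (addStaircase k p) :=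
  (lt_mex_iff_le_parts _ _).2 (Multiset.le_add_left _ _)

theorem card_lt_mex (k n : ℕ) :
    Nat.card {p : (n + ∑ i ∈ Finset.Icc 1 k, i).Partition // k < mex p} =
      Nat.card n.Partition := by
  refine (Nat.card_congr (Equiv.ofBijective
    (fun p => ⟨addStaircase k p, lt_mex_addStaircase k p⟩) ⟨fun p q h => ?_, ?_⟩)).symm
  · have : p.parts + (Finset.Icc 1 k).val = q.parts + (Finset.Icc 1 k).val :=
      congrArg (fun r => r.1.parts) h
    exact Nat.Partition.ext (add_right_cancel this)
  · rintro ⟨q, hq⟩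
    rw [lt_mex_iff_le_parts] at hq
    have hadd := Multiset.sub_add_cancel hq
    refine ⟨⟨q.parts - (Finset.Icc 1 k).val,
      fun hi => q.parts_pos (Multiset.mem_of_le (Multiset.sub_le_self _ _) hi), ?_⟩,
      Subtype.ext (Nat.Partition.ext hadd)⟩
    have := congrArg Multiset.sum hadd
    rw [Multiset.sum_add, q.parts_sum, Finset.sum_val] at this
    exact add_right_cancel this

theorem card_mex_add (j N : ℕ) :
    Nat.card {p : N.Partition // j < mex p ∧ Even (mex p + j)} +
      Nat.card {p : N.Partition // j + 1 < mex p ∧ Even (mex p + (j + 1))} =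
    Nat.card {p : N.Partition // j + 1 < mex p} := by
  rw [← card_subtype_add_card_subtype_not
    fun p : {p : N.Partition // j + 1 < mex p} => Even (mex p.1 + j)]
  congr 1
  · refine Nat.card_congr ((Equiv.subtypeEquivRight fun p => ?_).trans
      (Equiv.subtypeSubtypeEquivSubtypeInter _ fun p => Even (mex p + j)).symm)
    refine and_congr_left fun h => ⟨fun h' => ?_, fun h' => by omega⟩
    rw [Nat.even_iff] at h
    omega
  · refine Nat.card_congr ((Equiv.subtypeEquivRight fun p => ?_).trans
      (Equiv.subtypeSubtypeEquivSubtypeInter _ fun p => ¬ Even (mex p + j)).symm)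
    rw [← add_assoc, Nat.even_add_one]

theorem card_mex_eq_zero {j n : ℕ} (h : n ≤ j) :
    Nat.card {p : (n + ∑ i ∈ Finset.Icc 1 j, i).Partition // j < mex p ∧ Even (mex p + j)} = 0 := by
  have : IsEmpty
      {p : (n + ∑ i ∈ Finset.Icc 1 j, i).Partition // j < mex p ∧ Even (mex p + j)} := by
    refine ⟨fun ⟨p, hp, he⟩ => ?_⟩
    rw [Nat.even_iff] at he
    have hlt : j + 1 < mex p := by omega
    have hsub := (lt_mex_iff_le_parts p _).1 hlt
    obtain ⟨s, hs⟩ := Multiset.le_iff_exists_add.1 hsub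
    have h1 := congrArg Multiset.sum hs
    have h2 : (Finset.Icc 1 (j + 1)).val.sum = ∑ i ∈ Finset.Icc 1 (j + 1), i :=
      Finset.sum_val _
    rw [p.parts_sum, Multiset.sum_add, h2, Finset.sum_Icc_succ_top (by omega)] at h1
    omega
  exact Nat.card_of_isEmpty

theorem card_hasShiftedFixedPoint_eq_card_mex (n j : ℕ) :
    Nat.card {p : n.Partition // HasShiftedFixedPoint j (p.parts.sort (· ≥ ·))} =
      Nat.card {p : (n + ∑ i ∈ Finset.Icc 1 j, i).Partition //
        j < mex p ∧ Even (mex p + j)} := by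
  induction n using Nat.strong_induction_on generalizing j with
  | _ n ih =>
    rcases le_or_gt n j with h | h
    · rw [card_hasShiftedFixedPoint_eq_zero h, card_mex_eq_zero h]
    · obtain ⟨m, rfl⟩ : ∃ m, n = m + j + 1 := ⟨n - j - 1, by omega⟩
      have h1 := card_hasShiftedFixedPoint_add j m
      have h2 := card_mex_add j (m + ∑ i ∈ Finset.Icc 1 (j + 1), i)
      have h3 : m + ∑ i ∈ Finset.Icc 1 (j + 1), i = m + j + 1 + ∑ i ∈ Finset.Icc 1 j, i := by
        rw [Finset.sum_Icc_succ_top (by omega)]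
        omega
      rw [card_lt_mex, ← ih m (by omega) (j + 1), h3] at h2
      omega

theorem exists_nthPart_eq_iff {n : ℕ} (p : n.Partition) :
    (∃ i, 1 ≤ i ∧ nthPart p i = i) ↔ HasShiftedFixedPoint 0 (p.parts.sort (· ≥ ·)) := by
  constructor
  · rintro ⟨i, hi, h⟩
    exact ⟨i - 1, h.trans (by omega)⟩
  · rintro ⟨i, h⟩
    exact ⟨i + 1, by omega, h⟩

/-- For `n ≥ 1`, the number of partitions of `n` with a fixed point equals the number
of partitions of `n` whose mex is even. -/
theorem fixed_point_eq_even_mex (n : ℕ) (hn : 1 ≤ n) :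
    Nat.card {p : n.Partition // ∃ i, 1 ≤ i ∧ nthPart p i = i} =
      Nat.card {p : n.Partition // Even (mex p)} := by
  simp only [exists_nthPart_eq_iff]
  rw [card_hasShiftedFixedPoint_eq_card_mex]
  refine Nat.card_congr (Equiv.subtypeEquivRight fun p => and_iff_right ?_)
  rw [lt_mex_iff]
  simp
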